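/- arXiv:1109.2409 — 2 statements merged into one kernel-verified Lean document; each statement's English description precedes it below -/
import Mathlib

section
/- For a partition $\mu$ of $n$, let $H_\mu \subseteq S_{2n}$ denote the set of permutations with coset-type $\mu$. Then $|H_\mu| = (2^n n!)^2 / (2^{\ell(\mu)} z_\mu)$, where $\ell(\mu)$ is the length of $\mu$ and $z_\mu = \prod_{r \ge 1} r^{m_r(\mu)} m_r(\mu)!$ with $m_r(\mu)$ the number of parts of $\mu$ equal to $r$. -/
open scoped Classical

noncomputable section

/-- The vertex `2k-1` (0-indexed: `2k`). -/
def lo (n : ℕ) (k : Fin n) : Fin (2*n) := ⟨2*k.1, by have := k.2; omega⟩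
/-- The vertex `2k` (0-indexed: `2k+1`). -/
def hi (n : ℕ) (k : Fin n) : Fin (2*n) := ⟨2*k.1+1, by have := k.2; omega⟩

/-- The hyperoctahedral group `H_n ⊆ S_{2n}`, generated by the transpositions
`(2k-1, 2k)` and the double transpositions `(2i-1, 2j-1)(2i, 2j)` for `i < j`. -/
def hyperoctahedral (n : ℕ) : Subgroup (Equiv.Perm (Fin (2*n))) :=
  Subgroup.closure
    ({g | ∃ k : Fin n, g = Equiv.swap (lo n k) (hi n k)} ∪
     {g | ∃ i j : Fin n, i < j ∧
        g = Equiv.swap (lo n i) (lo n j) * Equiv.swap (hi n i) (hi n j)})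

/-- The graph `Γ(σ)` on vertices `1, …, 2n` with edges `{2k-1, 2k}` and
`{σ(2k-1), σ(2k)}` for `k = 1, …, n`. -/
def pairGraph (n : ℕ) (σ : Equiv.Perm (Fin (2*n))) : SimpleGraph (Fin (2*n)) :=
  SimpleGraph.fromRel (fun x y => ∃ k : Fin n,
    (x = lo n k ∧ y = hi n k) ∨ (x = σ (lo n k) ∧ y = σ (hi n k)))

/-- `ℓ′(σ)`, the number of connected components of `Γ(σ)`. -/
def compCount (n : ℕ) (σ : Equiv.Perm (Fin (2*n))) : ℕ :=
  Nat.card (pairGraph n σ).ConnectedComponent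

/-- The coset-type of `σ ∈ S_{2n}`: the multiset of half the sizes of the
connected components of `Γ(σ)`; it is a partition of `n`. -/
def cosetType (n : ℕ) (σ : Equiv.Perm (Fin (2*n))) : Multiset ℕ :=
  haveI : Fintype (pairGraph n σ).ConnectedComponent := Fintype.ofFinite _
  (Finset.univ : Finset (pairGraph n σ).ConnectedComponent).val.map
    (fun c => c.supp.ncard / 2)

/-- `z_μ = ∏_r r^{m_r(μ)} m_r(μ)!`. -/
def zmu (μ : Multiset ℕ) : ℕ :=
  μ.toFinset.prod fun r => r ^ μ.count r * (μ.count r).factorial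

/-!
Count pairs `(σ, c)`, where `c` is a proper 2-colouring of `Γ(σ)`. As a union of two perfect
matchings, `Γ(σ)` is bipartite, so a permutation `σ` of coset-type `μ` has `2 ^ ℓ(μ)` such
colourings. Conversely, a colouring singles out one vertex of each colour in every pair `{2k-1, 2k}`
and in every pair `{σ(2k-1), σ(2k)}`. After flipping pairs on both sides, which can be done in
`4 ^ n` ways, `σ` therefore preserves the colours and amounts to two arbitrary permutations `π₀`,
`π₁` of the `n` pairs, one for each colour. A connected component of `Γ(σ)` then consists of the
pairs in one cycle of `π₁ π₀⁻¹`, so the coset-type of `σ` is the cycle type, fixed points included,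
of `π₁ π₀⁻¹`. As `n! / z_μ` permutations have cycle type `μ`, and `π₀` is arbitrary, this gives
`|H_μ| * 2 ^ ℓ(μ) = 4 ^ n * n! * (n! / z_μ)`.
-/

open Equiv Equiv.Perm
open Function (Involutive RightInverse Surjective surjInv)

section PermutationsOfGivenPartition

theorem zmu_eq_prod_mul (m : Multiset ℕ) :
    zmu m = m.prod * ∏ r ∈ m.toFinset, (m.count r).factorial := by
  rw [zmu, Finset.prod_mul_distrib, ← Finset.prod_multiset_count]

theorem zmu_add_of_disjoint {s t : Multiset ℕ} (h : Disjoint s t) :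
    zmu (s + t) = zmu s * zmu t := by
  rw [zmu, Multiset.toFinset_add, Finset.prod_union (Multiset.disjoint_toFinset.2 h)]
  congr 1 <;> refine Finset.prod_congr rfl fun r hr => ?_ <;> rw [Multiset.mem_toFinset] at hr
  · rw [Multiset.count_add, Multiset.count_eq_zero_of_notMem (Multiset.disjoint_left.1 h hr),
      add_zero]
  · rw [Multiset.count_add, Multiset.count_eq_zero_of_notMem (Multiset.disjoint_right.1 h hr),
      zero_add]

theorem zmu_replicate_one (k : ℕ) : zmu (Multiset.replicate k 1) = k.factorial := by
  rcases eq_or_ne k 0 with rfl | hk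
  · simp [zmu]
  · simp [zmu, Multiset.toFinset_replicate, hk]

theorem zmu_pos {n : ℕ} (μ : n.Partition) : 0 < zmu μ.parts :=
  Finset.prod_pos fun _ hr =>
    Nat.mul_pos (pow_pos (μ.parts_pos (Multiset.mem_toFinset.1 hr)) _) (Nat.factorial_pos _)

theorem parts_eq_filter_two_le_add_replicate {n : ℕ} (μ : n.Partition) :
    μ.parts = μ.parts.filter (2 ≤ ·) +
      Multiset.replicate (n - (μ.parts.filter (2 ≤ ·)).sum) 1 := by
  have hsplit := Multiset.filter_add_not (2 ≤ ·) μ.parts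
  have hones : μ.parts.filter (¬ 2 ≤ ·) =
      Multiset.replicate (Multiset.card (μ.parts.filter (¬ 2 ≤ ·))) 1 := by
    refine Multiset.eq_replicate_card.2 fun r hr => ?_
    have := μ.parts_pos (Multiset.mem_of_mem_filter hr)
    have := Multiset.of_mem_filter hr
    omega
  have hsum := congrArg Multiset.sum hsplit
  rw [Multiset.sum_add, μ.parts_sum, hones, Multiset.sum_replicate, smul_eq_mul, mul_one] at hsum
  conv_lhs => rw [← hsplit, hones]
  congr 2
  omega

variable {α : Type*} [Fintype α] [DecidableEq α]

theorem partition_parts_eq_iff_cycleType_eq {n : ℕ} (hα : Fintype.card α = n) (μ : n.Partition)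
    (w : Perm α) :
    w.partition.parts = μ.parts ↔ w.cycleType = μ.parts.filter (2 ≤ ·) := by
  constructor
  · intro h
    rw [← filter_parts_partition_eq_cycleType, h]
  · intro h
    rw [parts_partition, parts_eq_filter_two_le_add_replicate μ, ← h, sum_cycleType, hα]

theorem card_partition_parts_eq_mul_zmu {n : ℕ} (hα : Fintype.card α = n) (μ : n.Partition) :
    Nat.card {w : Perm α // w.partition.parts = μ.parts} * zmu μ.parts = n.factorial := by
  have hsplit := parts_eq_filter_two_le_add_replicate μ
  have hiff := partition_parts_eq_iff_cycleType_eq hα μ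
  set m := μ.parts.filter (2 ≤ ·)
  have htwo : ∀ r ∈ m, 2 ≤ r := fun r hr => Multiset.of_mem_filter hr
  have hle : m.sum ≤ n := by
    rw [← μ.parts_sum, hsplit, Multiset.sum_add]
    exact Nat.le_add_right _ _
  have hzmu : zmu μ.parts =
      (n - m.sum).factorial * m.prod * ∏ r ∈ m.toFinset, (m.count r).factorial := by
    have hdisj : Disjoint m (Multiset.replicate (n - m.sum) 1) :=
      Multiset.disjoint_left.2 fun hr hr' => by
        have := htwo _ hr
        have := Multiset.eq_of_mem_replicate hr'
        omega
    rw [hsplit, zmu_add_of_disjoint hdisj, zmu_replicate_one, zmu_eq_prod_mul]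
    ring
  have hcard := card_of_cycleType_mul_eq α m
  rw [hα, if_pos ⟨hle, htwo⟩] at hcard
  rw [hzmu, ← hcard, Nat.card_congr (Equiv.subtypeEquivRight hiff), Nat.card_eq_fintype_card,
    Fintype.card_subtype]

end PermutationsOfGivenPartition

section CycleFibers

variable {α C : Type*} [Fintype α] [DecidableEq α] [Fintype C] [DecidableEq C] {w : Perm α}
  {j : α → C} {s : C → α}

theorem map_card_fiber_filter_ne_eq_cycleType (hs : RightInverse s j)
    (hj : ∀ x y, j x = j y ↔ w.SameCycle x y) :
    (Finset.univ.val.filter fun c => w (s c) ≠ s c).map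
      (fun c => (Finset.univ.filter (j · = c)).card) = w.cycleType := by
  have hmem {c : C} (hc : c ∈ Finset.univ.val.filter fun c => w (s c) ≠ s c) :
      s c ∈ w.support := mem_support.2 (Multiset.mem_filter.1 hc).2
  rw [cycleType_def]
  refine Multiset.map_eq_map_of_bij_of_nodup _ _ (Finset.univ.nodup.filter _)
    w.cycleFactorsFinset.nodup (fun c _ => w.cycleOf (s c)) ?_ ?_ ?_ ?_
  · exact fun c hc => cycleOf_mem_cycleFactorsFinset_iff.2 (hmem hc)
  · intro c hc d hd h
    rwa [← sameCycle_iff_cycleOf_eq_of_mem_support (hmem hc) (hmem hd), ← hj, hs, hs] at h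
  · intro γ (hγ : γ ∈ w.cycleFactorsFinset)
    obtain ⟨x, hx⟩ := (mem_cycleFactorsFinset_iff.1 hγ).1.nonempty_support
    have hxw := mem_cycleFactorsFinset_support_le hγ hx
    have hsx : w.SameCycle (s (j x)) x := by rw [← hj, hs]
    refine ⟨j x, Multiset.mem_filter.2 ⟨Finset.mem_univ _, ?_⟩, ?_⟩
    · exact mem_support.1 (hsx.mem_support_iff.2 hxw)
    · rw [hsx.cycleOf_eq, cycle_is_cycleOf hx hγ]
  · intro c hc
    refine congrArg Finset.card (Finset.ext fun x => ?_)
    rw [mem_support_cycleOf_iff' (mem_support.1 (hmem hc)), ← hj, hs]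
    simp [eq_comm]

theorem map_card_fiber_filter_eq_eq_replicate (hs : RightInverse s j)
    (hj : ∀ x y, j x = j y ↔ w.SameCycle x y) :
    (Finset.univ.val.filter fun c => ¬ w (s c) ≠ s c).map
      (fun c => (Finset.univ.filter (j · = c)).card) =
      Multiset.replicate (Fintype.card α - w.support.card) 1 := by
  refine Multiset.eq_replicate.2 ⟨?_, fun r hr => ?_⟩
  · rw [Multiset.card_map, ← Finset.card_compl]
    refine Finset.card_bij (s := Finset.univ.filter fun c => ¬ w (s c) ≠ s c) (fun c _ => s c)
      (by simp) (fun c _ d _ h => hs.injective h) fun x hx => ?_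
    have hx : w x = x := by simpa using hx
    have hsx : s (j x) = x :=
      ((hj x (s (j x))).1 (hs (j x)).symm |>.eq_of_left hx).symm
    exact ⟨j x, by simp [hsx, hx], hsx⟩
  · obtain ⟨c, hc, rfl⟩ := Multiset.mem_map.1 hr
    have hfix : w (s c) = s c := not_not.1 (Multiset.mem_filter.1 hc).2
    refine Finset.card_eq_one.2 ⟨s c, Finset.ext fun x => ?_⟩
    rw [Finset.mem_filter_univ, Finset.mem_singleton]
    refine ⟨fun h => ?_, fun h => h ▸ hs c⟩
    exact ((hj (s c) x).1 ((hs c).trans h.symm) |>.eq_of_left hfix).symm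

theorem map_card_fiber_eq_partition_parts (hsurj : Surjective j)
    (hj : ∀ x y, j x = j y ↔ w.SameCycle x y) :
    Finset.univ.val.map (fun c => (Finset.univ.filter (j · = c)).card) = w.partition.parts := by
  have hs := Function.rightInverse_surjInv hsurj
  rw [← Multiset.filter_add_not (fun c => w (surjInv hsurj c) ≠ surjInv hsurj c)
    Finset.univ.val, Multiset.map_add, map_card_fiber_filter_ne_eq_cycleType hs hj,
    map_card_fiber_filter_eq_eq_replicate hs hj, parts_partition]

end CycleFibers

section BoolColorings

theorem exists_bool_map_eq_not {α : Type*} {s : α → α} (hs : Involutive s)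
    (hne : ∀ x, s x ≠ x) : ∃ c : α → Bool, ∀ x, c (s x) = !c x := by
  let : LinearOrder α := IsWellOrder.linearOrder WellOrderingRel
  refine ⟨fun x => decide (x < s x), fun x => ?_⟩
  dsimp only
  rw [hs x, ← decide_not, decide_eq_decide, not_lt]
  exact (hne x).le_iff_lt.symm

variable {V : Type*} {G : SimpleGraph V} {τ τ' : Perm V}

theorem mul_mul_mul_inv_eq_inv_of_involutive (hτ : Involutive τ) (hτ' : Involutive τ') :
    τ * (τ * τ') * τ⁻¹ = (τ * τ')⁻¹ := by
  have h : τ * τ = 1 := Perm.ext hτ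
  have h' : τ'⁻¹ = τ' := inv_eq_of_mul_eq_one_right (Perm.ext hτ')
  rw [← mul_assoc, h, one_mul, mul_inv_rev, h']

theorem apply_mul_zpow_apply_of_involutive (hτ : Involutive τ) (hτ' : Involutive τ') (k : ℤ)
    (x : V) : τ (((τ * τ') ^ k) x) = ((τ * τ') ^ (-k)) (τ x) := by
  have h : τ * (τ * τ') ^ k * τ⁻¹ = (τ * τ') ^ (-k) := by
    rw [← conj_zpow, mul_mul_mul_inv_eq_inv_of_involutive hτ hτ', inv_zpow']
  rw [← h]
  simp

theorem not_sameCycle_mul_apply (hτ : Involutive τ) (hτ' : Involutive τ') (hne : ∀ x, τ x ≠ x)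
    (hne' : ∀ x, τ' x ≠ x) (x : V) : ¬ (τ * τ').SameCycle x (τ x) := by
  rintro ⟨k, hk⟩
  -- In the dihedral group `⟨τ, τ'⟩` the reflection `τ * (τ * τ') ^ k`, which fixes `x` by `hk`, is
  -- conjugate to `τ` or to `τ'`, according to the parity of `k`.
  have hreflect (i : ℤ) : τ (((τ * τ') ^ i) x) = ((τ * τ') ^ (k - i)) x := by
    rw [apply_mul_zpow_apply_of_involutive hτ hτ', ← hk, ← Perm.mul_apply, ← zpow_add,
      neg_add_eq_sub]
  obtain ⟨i, rfl | rfl⟩ := Int.even_or_odd' k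
  · apply hne (((τ * τ') ^ i) x)
    rw [hreflect, two_mul, add_sub_cancel_right]
  · apply hne' (((τ * τ') ^ i) x)
    apply τ.injective
    rw [hreflect, ← Perm.mul_apply, ← Perm.mul_apply, ← zpow_one_add]
    congr 2
    ring

theorem nonempty_coloring_bool_of_adj_involutive (hτ : Involutive τ) (hτ' : Involutive τ')
    (hne : ∀ x, τ x ≠ x) (hne' : ∀ x, τ' x ≠ x)
    (hG : ∀ u v, G.Adj u v → v = τ u ∨ v = τ' u) : Nonempty (G.Coloring Bool) := by
  let orbits := SameCycle.setoid (τ * τ')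
  have hmap : ∀ x y, (τ * τ').SameCycle x y → (τ * τ').SameCycle (τ x) (τ y) := fun x y h => by
    rw [← sameCycle_inv, ← mul_mul_mul_inv_eq_inv_of_involutive hτ hτ']
    exact h.conj
  let s : Quotient orbits → Quotient orbits := Quotient.map τ hmap
  have hs : Involutive s := by
    rintro ⟨x⟩
    exact congrArg (Quotient.mk orbits) (hτ x)
  have hs_ne : ∀ q, s q ≠ q := by
    rintro ⟨x⟩ h
    exact not_sameCycle_mul_apply hτ hτ' hne hne' x (Quotient.exact h).symm
  have hmk : ∀ x, Quotient.mk orbits (τ' x) = s (Quotient.mk orbits x) := fun x =>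
    Quotient.sound ⟨1, by simp [hτ' x]⟩
  obtain ⟨c, hc⟩ := exists_bool_map_eq_not hs hs_ne
  refine ⟨.mk (fun x => c (Quotient.mk orbits x)) fun {u v} huv => ?_⟩
  have hv : Quotient.mk orbits v = s (Quotient.mk orbits u) := by
    rcases hG u v huv with rfl | rfl
    · rfl
    · exact hmk u
  rw [hv, hc]
  simp

theorem apply_eq_of_sameCycle {α β : Type*} {w : Perm α} {f : α → β} (hf : ∀ x, f (w x) = f x)
    {x y : α} (h : w.SameCycle x y) : f x = f y := by
  obtain ⟨k, rfl⟩ := h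
  induction k with
  | zero => rfl
  | succ k ih => rw [add_comm, zpow_one_add, Perm.mul_apply, hf, ih]
  | pred k ih =>
    rw [ih, ← hf ((w ^ (-(k : ℤ) - 1)) x), ← Perm.mul_apply, ← zpow_one_add, add_sub_cancel]

theorem eq_of_reachable_of_adj {β : Type*} {f : V → β} (hf : ∀ u v, G.Adj u v → f u = f v)
    {u v : V} (h : G.Reachable u v) : f u = f v := by
  obtain ⟨p⟩ := h
  induction p with
  | nil => rfl
  | cons huv _ ih => exact (hf _ _ huv).trans ih

theorem xor_coloring_eq_of_reachable (c c' : G.Coloring Bool) {u v : V} (h : G.Reachable u v) :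
    xor (c u) (c' u) = xor (c v) (c' v) := by
  refine eq_of_reachable_of_adj (f := fun v => xor (c v) (c' v)) (fun u v huv => ?_) h
  rw [Bool.eq_not.2 (c.valid huv), Bool.eq_not.2 (c'.valid huv), Bool.not_xor_not]

/-- Any two colourings of `G` with colours in `Bool` differ, on each connected component, by a
constant; so a choice of one colouring identifies the others with the functions from connected
components to `Bool`. -/
def componentsToBoolEquivColoring (c₀ : G.Coloring Bool) :
    (G.ConnectedComponent → Bool) ≃ G.Coloring Bool where
  toFun h := .mk (fun v => xor (c₀ v) (h (G.connectedComponentMk v))) fun {u v} huv => by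
    rw [SimpleGraph.ConnectedComponent.sound huv.reachable, Ne, Bool.xor_left_inj]
    exact c₀.valid huv
  invFun c := SimpleGraph.ConnectedComponent.lift (fun v => xor (c₀ v) (c v))
    fun _ _ p _ => xor_coloring_eq_of_reachable c₀ c ⟨p⟩
  left_inv h := by
    ext C
    induction C using SimpleGraph.ConnectedComponent.ind with
    | h v => simp [SimpleGraph.Coloring.mk]
  right_inv c := by
    ext v
    simp [SimpleGraph.Coloring.mk]

theorem card_coloring_bool [Finite G.ConnectedComponent] (h : Nonempty (G.Coloring Bool)) :
    Nat.card (G.Coloring Bool) = 2 ^ Nat.card G.ConnectedComponent := by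
  rw [← Nat.card_congr (componentsToBoolEquivColoring h.some), Nat.card_fun,
    Nat.card_eq_fintype_card, Fintype.card_bool]

end BoolColorings

section PairColorings

variable {ι V : Type*}

theorem exists_prodCongrLeft_eq {α β : Type*} (ρ : Perm (α × β)) (hρ : ∀ p, (ρ p).2 = p.2) :
    ∃ π : β → Perm α, prodCongrLeft π = ρ := by
  have hρ_symm (p : α × β) : (ρ.symm p).2 = p.2 := by simpa using (hρ (ρ.symm p)).symm
  have hfst (x : α) (y : β) : ((ρ (x, y)).1, y) = ρ (x, y) := Prod.ext rfl (hρ (x, y)).symm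
  have hfst_symm (x : α) (y : β) : ((ρ.symm (x, y)).1, y) = ρ.symm (x, y) :=
    Prod.ext rfl (hρ_symm (x, y)).symm
  refine ⟨fun y => ⟨fun x => (ρ (x, y)).1, fun x => (ρ.symm (x, y)).1, fun x => ?_, fun x => ?_⟩,
    Perm.ext fun ⟨x, y⟩ => hfst x y⟩
  · simp [hfst]
  · simp [hfst_symm]

theorem prodCongrLeft_injective {α β γ : Type*} :
    Function.Injective (prodCongrLeft : (β → α ≃ γ) → α × β ≃ γ × β) := fun _ _ h =>
  funext fun y => Equiv.ext fun x => congrArg Prod.fst (Equiv.congr_fun h (x, y))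

/-- The permutation of `ι × Bool` exchanging the two elements of each pair `{i} × Bool` with
`f i = true`. -/
def flipPairs (f : ι → Bool) : Perm (ι × Bool) :=
  Involutive.toPerm (fun p => (p.1, xor p.2 (f p.1))) fun p => by simp

@[simp]
theorem flipPairs_apply (f : ι → Bool) (p : ι × Bool) :
    flipPairs f p = (p.1, xor p.2 (f p.1)) :=
  rfl

theorem flipPairs_snd_injective : Function.Injective fun (f : ι → Bool) p => (flipPairs f p).2 :=
  fun f g h => funext fun i => by simpa using congrFun h (i, false)

/-- The fixed-point-free involution attached to a division of `V` into pairs. The division is given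
by a labelling `a`, whose pairs are the sets `{a (i, false), a (i, true)}`. -/
def partner (a : ι × Bool ≃ V) : Perm V :=
  a.permCongr (prodCongrRight fun _ => boolNot)

@[simp]
theorem partner_apply (a : ι × Bool ≃ V) (p : ι × Bool) : partner a (a p) = a (p.1, !p.2) := by
  simp [partner, boolNot, prodCongrRight]

theorem partner_involutive (a : ι × Bool ≃ V) : Involutive (partner a) :=
  a.forall_congr_right.1 fun p => by simp

theorem partner_ne_self (a : ι × Bool ≃ V) : ∀ v, partner a v ≠ v :=
  a.forall_congr_right.1 fun p => by simp [Prod.ext_iff]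

theorem partner_flipPairs_trans (f : ι → Bool) (a : ι × Bool ≃ V) :
    partner ((flipPairs f).trans a) = partner a :=
  Perm.ext <| ((flipPairs f).trans a).forall_congr_right.1 fun p => by
    rw [partner_apply]
    simp

/-- A function to `Bool` that takes different values on the two elements of each pair. -/
def SeparatesPairs (c : V → Bool) (a : ι × Bool ≃ V) : Prop :=
  ∀ v, c (partner a v) = !c v

theorem separatesPairs_iff_exists_flipPairs {c : V → Bool} {a : ι × Bool ≃ V} :
    SeparatesPairs c a ↔ ∃ f, ∀ p, c (a p) = (flipPairs f p).2 := by
  constructor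
  · refine fun h => ⟨fun i => c (a (i, false)), ?_⟩
    rintro ⟨i, _ | _⟩
    · simp
    · simpa using h (a (i, false))
  · rintro ⟨f, hf⟩
    exact a.forall_congr_right.1 fun p => by rw [partner_apply]; simp [hf]

/-- The functions to `Bool` separating the pairs of two divisions at once, that is, the proper
2-colourings of the graph whose edges are the pairs of both divisions. -/
abbrev PairColoring (a b : ι × Bool ≃ V) : Type _ :=
  {c : V → Bool // SeparatesPairs c a ∧ SeparatesPairs c b}

/-- The permutation of `V` which, up to flipping pairs on both sides, acts by `π false` on the first
elements of the pairs and by `π true` on the second elements: `g` flips pairs of the source and `f`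
flips pairs of the target. -/
def flippedPerm (a : ι × Bool ≃ V) (π : Bool → Perm ι) (f g : ι → Bool) : Perm V :=
  a.permCongr (flipPairs f * prodCongrLeft π * flipPairs g)

theorem trans_flippedPerm (a : ι × Bool ≃ V) (π : Bool → Perm ι) (f g : ι → Bool) :
    a.trans (flippedPerm a π f g) =
      (flipPairs g).trans ((prodCongrLeft π).trans ((flipPairs f).trans a)) :=
  Equiv.ext fun p => by simp [flippedPerm]

theorem flipPairs_flippedPerm_apply_snd (a : ι × Bool ≃ V) (π : Bool → Perm ι) (f g : ι → Bool)
    (p : ι × Bool) :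
    (flipPairs f (a.symm (flippedPerm a π f g (a p)))).2 = (flipPairs g p).2 := by
  simp [flippedPerm]

/-- The permutation `flippedPerm a π f g` together with the pair colouring that is `false` on those
elements which the flips `f` and `g` put first in their pairs. -/
def coloredPerm (a : ι × Bool ≃ V) (d : (Bool → Perm ι) × (ι → Bool) × (ι → Bool)) :
    Σ σ : Perm V, PairColoring a (a.trans σ) :=
  ⟨flippedPerm a d.1 d.2.1 d.2.2, fun v => (flipPairs d.2.1 (a.symm v)).2,
    separatesPairs_iff_exists_flipPairs.2 ⟨d.2.1, fun p => by rw [a.symm_apply_apply]⟩,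
    separatesPairs_iff_exists_flipPairs.2
      ⟨d.2.2, flipPairs_flippedPerm_apply_snd a d.1 d.2.1 d.2.2⟩⟩

theorem coloredPerm_injective (a : ι × Bool ≃ V) : Function.Injective (coloredPerm a) := by
  rintro ⟨π, f, g⟩ ⟨π', f', g'⟩ h
  have hσ : flippedPerm a π f g = flippedPerm a π' f' g' := congrArg Sigma.fst h
  have hc : (fun v => (flipPairs f (a.symm v)).2) = fun v => (flipPairs f' (a.symm v)).2 :=
    congrArg (fun x => x.2.1) h
  obtain rfl : f = f' := flipPairs_snd_injective <| funext fun p => by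
    simpa using congrFun hc (a p)
  obtain rfl : g = g' := flipPairs_snd_injective <| funext fun p => by
    dsimp only
    rw [← flipPairs_flippedPerm_apply_snd a π f g, hσ, flipPairs_flippedPerm_apply_snd]
  obtain rfl : π = π' := prodCongrLeft_injective <|
    mul_left_cancel (mul_right_cancel (a.permCongr.injective hσ))
  rfl

theorem coloredPerm_surjective (a : ι × Bool ≃ V) : Surjective (coloredPerm a) := by
  rintro ⟨σ, c, hca, hcσ⟩
  obtain ⟨f, hf⟩ := separatesPairs_iff_exists_flipPairs.1 hca
  obtain ⟨g, hg⟩ := separatesPairs_iff_exists_flipPairs.1 hcσ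
  have hf_symm (v : V) : (flipPairs f (a.symm v)).2 = c v := by rw [← hf, a.apply_symm_apply]
  obtain ⟨π, hπ⟩ := exists_prodCongrLeft_eq
    ((flipPairs f)⁻¹ * a.symm.permCongr σ * (flipPairs g)⁻¹) fun p => by
      obtain ⟨q, rfl⟩ := (flipPairs g).surjective p
      calc _ = (flipPairs f (a.symm (σ (a ((flipPairs g).symm (flipPairs g q)))))).2 := rfl
        _ = (flipPairs f (a.symm (σ (a q)))).2 := by rw [symm_apply_apply]
        _ = (flipPairs g q).2 := (hf_symm _).trans (hg q)
  refine ⟨(π, f, g), Sigma.subtype_ext ?_ (funext hf_symm)⟩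
  simp [coloredPerm, flippedPerm, hπ, mul_assoc, Equiv.ext_iff]

/-- Every pair-coloured permutation is obtained by `coloredPerm` in exactly one way. -/
def coloredPermEquiv (a : ι × Bool ≃ V) :
    (Bool → Perm ι) × (ι → Bool) × (ι → Bool) ≃ Σ σ : Perm V, PairColoring a (a.trans σ) :=
  .ofBijective (coloredPerm a) ⟨coloredPerm_injective a, coloredPerm_surjective a⟩

end PairColorings

section PairingGraph

variable {ι V : Type*}

/-- The graph on `V` whose edges are the pairs of the divisions labelled by `a` and by `b`. -/
def pairingGraph (a b : ι × Bool ≃ V) : SimpleGraph V where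
  Adj u v := v = partner a u ∨ v = partner b u
  symm := ⟨by
    rintro u v (rfl | rfl)
    · exact .inl (partner_involutive a u).symm
    · exact .inr (partner_involutive b u).symm⟩
  loopless := ⟨fun u h => h.elim (partner_ne_self a u ·.symm) (partner_ne_self b u ·.symm)⟩

theorem nonempty_pairingGraph_coloring_bool (a b : ι × Bool ≃ V) :
    Nonempty ((pairingGraph a b).Coloring Bool) :=
  nonempty_coloring_bool_of_adj_involutive (partner_involutive a) (partner_involutive b)
    (partner_ne_self a) (partner_ne_self b) fun _ _ h => h

/-- Proper 2-colourings of `pairingGraph a b` in the sense of `SimpleGraph.Coloring` are the same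
thing as pair colourings. -/
def pairingGraphColoringEquiv (a b : ι × Bool ≃ V) :
    (pairingGraph a b).Coloring Bool ≃ PairColoring a b where
  toFun c := ⟨c, fun v => Bool.eq_not.2 (c.valid (.inl rfl)).symm,
    fun v => Bool.eq_not.2 (c.valid (.inr rfl)).symm⟩
  invFun c := .mk c.1 fun {u v} huv => by
    rcases huv with rfl | rfl
    · simp [c.2.1 u]
    · simp [c.2.2 u]
  left_inv _ := rfl
  right_inv _ := rfl

theorem card_pairColoring [Finite V] (a b : ι × Bool ≃ V) :
    Nat.card (PairColoring a b) = 2 ^ Nat.card (pairingGraph a b).ConnectedComponent := by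
  rw [← Nat.card_congr (pairingGraphColoringEquiv a b),
    card_coloring_bool (nonempty_pairingGraph_coloring_bool a b)]

theorem pairingGraph_flippedPerm (a : ι × Bool ≃ V) (π : Bool → Perm ι) (f g : ι → Bool) :
    pairingGraph a (a.trans (flippedPerm a π f g)) =
      pairingGraph ((flipPairs f).trans a) ((prodCongrLeft π).trans ((flipPairs f).trans a)) := by
  ext u v
  simp only [pairingGraph, trans_flippedPerm, partner_flipPairs_trans]

theorem sameCycle_symm_apply_fst_of_adj {a : ι × Bool ≃ V} {π : Bool → Perm ι} {u v : V}
    (h : (pairingGraph a ((prodCongrLeft π).trans a)).Adj u v) :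
    (π true * (π false)⁻¹).SameCycle (a.symm u).1 (a.symm v).1 := by
  have hstep (i : ι) : (π true * (π false)⁻¹).SameCycle (π false i) (π true i) := ⟨1, by simp⟩
  rcases h with rfl | rfl
  · obtain ⟨p, rfl⟩ := a.surjective u
    simp [SameCycle.refl]
  · obtain ⟨⟨i, s⟩, rfl⟩ := ((prodCongrLeft π).trans a).surjective u
    rw [partner_apply]
    cases s
    · simpa using hstep i
    · simpa using (hstep i).symm

theorem reachable_mk_mk (a b : ι × Bool ≃ V) (i : ι) (s t : Bool) :
    (pairingGraph a b).Reachable (a (i, s)) (a (i, t)) := by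
  rcases eq_or_ne s t with rfl | hst
  · rfl
  · refine SimpleGraph.Adj.reachable (.inl ?_)
    rw [partner_apply, Bool.eq_not.2 hst.symm]

theorem reachable_mk_apply_mk (a : ι × Bool ≃ V) (π : Bool → Perm ι) (i : ι) :
    (pairingGraph a ((prodCongrLeft π).trans a)).Reachable
      (a (i, false)) (a ((π true * (π false)⁻¹) i, true)) := by
  refine SimpleGraph.Adj.reachable (.inr ?_)
  have := partner_apply ((prodCongrLeft π).trans a) ((π false)⁻¹ i, false)
  simpa using this.symm

theorem reachable_pairingGraph_iff_sameCycle (a : ι × Bool ≃ V) (π : Bool → Perm ι) (u v : V) :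
    (pairingGraph a ((prodCongrLeft π).trans a)).Reachable u v ↔
      (π true * (π false)⁻¹).SameCycle (a.symm u).1 (a.symm v).1 := by
  set G := pairingGraph a ((prodCongrLeft π).trans a)
  constructor
  · intro h
    let := SameCycle.setoid (π true * (π false)⁻¹)
    exact Quotient.exact <| eq_of_reachable_of_adj (f := fun v => ⟦(a.symm v).1⟧)
      (fun u v huv => Quotient.sound (sameCycle_symm_apply_fst_of_adj huv)) h
  · intro h
    obtain ⟨⟨i, s⟩, rfl⟩ := a.surjective u
    obtain ⟨⟨j, t⟩, rfl⟩ := a.surjective v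
    have hcomponent : G.connectedComponentMk (a (i, false)) =
        G.connectedComponentMk (a (j, false)) :=
      apply_eq_of_sameCycle (f := fun k => G.connectedComponentMk (a (k, false)))
        (fun k => SimpleGraph.ConnectedComponent.sound <|
          (reachable_mk_mk _ _ _ _ _).trans (reachable_mk_apply_mk a π k).symm) (by simpa using h)
    exact (reachable_mk_mk _ _ i s false).trans <|
      (SimpleGraph.ConnectedComponent.exact hcomponent).trans (reachable_mk_mk _ _ j false t)

theorem map_ncard_supp_div_two_eq_partition_parts [Fintype ι] [DecidableEq ι] {G : SimpleGraph V}
    [Fintype G.ConnectedComponent] {w : Perm ι} (a : ι × Bool ≃ V)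
    (hG : ∀ u v, G.Reachable u v ↔ w.SameCycle (a.symm u).1 (a.symm v).1) :
    (Finset.univ : Finset G.ConnectedComponent).val.map (fun c => c.supp.ncard / 2) =
      w.partition.parts := by
  let j (i : ι) : G.ConnectedComponent := G.connectedComponentMk (a (i, false))
  have hmk (p : ι × Bool) : G.connectedComponentMk (a p) = j p.1 :=
    SimpleGraph.ConnectedComponent.sound ((hG _ _).2 (by simp [SameCycle.refl]))
  have hsurj : Surjective j := fun c => by
    induction c using SimpleGraph.ConnectedComponent.ind with | h v =>
    exact ⟨(a.symm v).1, by rw [← hmk, a.apply_symm_apply]⟩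
  have hsupp (c : G.ConnectedComponent) :
      c.supp = a '' ↑((Finset.univ.filter (j · = c)) ×ˢ (Finset.univ : Finset Bool)) :=
    Set.ext <| a.forall_congr_right.1 fun p => by
      rw [SimpleGraph.ConnectedComponent.mem_supp_iff, hmk, a.injective.mem_set_image]
      simp
  rw [← map_card_fiber_eq_partition_parts hsurj (w := w)
    fun i k => by rw [SimpleGraph.ConnectedComponent.eq, hG]; simp]
  refine Multiset.map_congr rfl fun c _ => ?_
  rw [hsupp, Set.ncard_image_of_injective _ a.injective, Set.ncard_coe_finset,
    Finset.card_product]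
  simp

end PairingGraph

section CosetType

/-- The labelling of `Fin (2 * n)` whose pairs are the sets `{lo n k, hi n k}`. -/
def pairLabelling (n : ℕ) : Fin n × Bool ≃ Fin (2 * n) :=
  ((Equiv.prodCongr (Equiv.refl _) finTwoEquiv.symm).trans finProdFinEquiv).trans
    (finCongr (mul_comm n 2))

theorem pairLabelling_false (n : ℕ) (k : Fin n) : pairLabelling n (k, false) = lo n k :=
  Fin.ext <| by simp [pairLabelling, lo, finTwoEquiv]

theorem pairLabelling_true (n : ℕ) (k : Fin n) : pairLabelling n (k, true) = hi n k :=
  Fin.ext <| by simp [pairLabelling, hi, finTwoEquiv, add_comm]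

theorem eq_partner_iff {ι V : Type*} (a : ι × Bool ≃ V) (u v : V) :
    v = partner a u ↔ ∃ i, (u = a (i, false) ∧ v = a (i, true)) ∨
      (v = a (i, false) ∧ u = a (i, true)) := by
  obtain ⟨⟨i, s⟩, rfl⟩ := a.surjective u
  cases s <;> simp

theorem pairGraph_eq_pairingGraph (n : ℕ) (σ : Perm (Fin (2 * n))) :
    pairGraph n σ = pairingGraph (pairLabelling n) ((pairLabelling n).trans σ) := by
  ext u v
  have hadj : (pairingGraph (pairLabelling n) ((pairLabelling n).trans σ)).Adj u v ↔ _ :=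
    or_congr (eq_partner_iff _ u v) (eq_partner_iff _ u v)
  have := (pairingGraph (pairLabelling n) ((pairLabelling n).trans σ)).ne_of_adj (a := u) (b := v)
  simp only [trans_apply, pairLabelling_false, pairLabelling_true] at hadj
  rw [pairGraph, SimpleGraph.fromRel_adj]
  grind

theorem card_cosetType (n : ℕ) (σ : Perm (Fin (2 * n))) :
    Multiset.card (cosetType n σ) = Nat.card (pairGraph n σ).ConnectedComponent := by
  let := Fintype.ofFinite (pairGraph n σ).ConnectedComponent
  rw [Nat.card_eq_fintype_card, cosetType, Multiset.card_map]
  rfl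

theorem cosetType_flippedPerm (n : ℕ) (π : Bool → Perm (Fin n)) (f g : Fin n → Bool) :
    cosetType n (flippedPerm (pairLabelling n) π f g) =
      (π true * (π false)⁻¹).partition.parts := by
  let := Fintype.ofFinite (pairGraph n (flippedPerm (pairLabelling n) π f g)).ConnectedComponent
  refine map_ncard_supp_div_two_eq_partition_parts ((flipPairs f).trans (pairLabelling n)) ?_
  rw [pairGraph_eq_pairingGraph, pairingGraph_flippedPerm]
  exact reachable_pairingGraph_iff_sameCycle _ π

variable {n : ℕ} (m : Multiset ℕ)

theorem card_cosetType_mul_two_pow_eq :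
    Nat.card {σ : Perm (Fin (2 * n)) // cosetType n σ = m} * 2 ^ Multiset.card m =
      Nat.card (Σ σ : {σ : Perm (Fin (2 * n)) // cosetType n σ = m},
        PairColoring (pairLabelling n) ((pairLabelling n).trans σ)) := by
  have hfiber (σ : {σ : Perm (Fin (2 * n)) // cosetType n σ = m}) :
      Nat.card (PairColoring (pairLabelling n) ((pairLabelling n).trans σ)) =
        2 ^ Multiset.card m := by
    rw [card_pairColoring, ← pairGraph_eq_pairingGraph, ← card_cosetType, σ.2]
  rw [Nat.card_sigma, Finset.sum_congr rfl fun σ _ => hfiber σ]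
  simp [Nat.card_eq_fintype_card]

/-- The change of variables `(x, y) ↦ (y * x⁻¹, x)` for pairs of group elements, restricted to the
pairs for which `y * x⁻¹` satisfies `P`. -/
def boolArrowQuotientEquiv {G : Type*} [Group G] (P : G → Prop) :
    {π : Bool → G // P (π true * (π false)⁻¹)} ≃ {w : G // P w} × G where
  toFun π := (⟨π.1 true * (π.1 false)⁻¹, π.2⟩, π.1 false)
  invFun x := ⟨fun s => bif s then x.1.1 * x.2 else x.2, by simpa using x.1.2⟩
  left_inv π := Subtype.ext <| funext fun s => by cases s <;> simp
  right_inv x := by simp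

/-- The parametrisation `coloredPermEquiv` restricted to the permutations of coset-type `m`. -/
def cosetTypeColoredPermEquiv :
    {d : (Bool → Perm (Fin n)) × (Fin n → Bool) × (Fin n → Bool) //
        (d.1 true * (d.1 false)⁻¹).partition.parts = m} ≃
      Σ σ : {σ : Perm (Fin (2 * n)) // cosetType n σ = m},
        PairColoring (pairLabelling n) ((pairLabelling n).trans σ) :=
  ((coloredPermEquiv (pairLabelling n)).subtypeEquiv fun d => by
    rw [← cosetType_flippedPerm n d.1 d.2.1 d.2.2]; rfl).trans
    (subtypeSigmaEquiv _ fun σ => cosetType n σ = m)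

theorem card_sigma_pairColoring :
    Nat.card (Σ σ : {σ : Perm (Fin (2 * n)) // cosetType n σ = m},
        PairColoring (pairLabelling n) ((pairLabelling n).trans σ)) =
      Nat.card {w : Perm (Fin n) // w.partition.parts = m} * n.factorial * (2 ^ n) ^ 2 := by
  let e := (prodSubtypeFstEquivSubtypeProd (β := (Fin n → Bool) × (Fin n → Bool))
    (p := fun π : Bool → Perm (Fin n) => (π true * (π false)⁻¹).partition.parts = m)).trans
    (.prodCongr (boolArrowQuotientEquiv fun w : Perm (Fin n) => w.partition.parts = m) (.refl _))
  rw [← Nat.card_congr (cosetTypeColoredPermEquiv m), Nat.card_congr e]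
  simp [Nat.card_eq_fintype_card, Fintype.card_perm, sq]

theorem card_cosetType_mul_eq (μ : n.Partition) :
    Nat.card {σ : Perm (Fin (2 * n)) // cosetType n σ = μ.parts} *
      (2 ^ Multiset.card μ.parts * zmu μ.parts) = (2 ^ n * n.factorial) ^ 2 := by
  rw [← mul_assoc, card_cosetType_mul_two_pow_eq, card_sigma_pairColoring, mul_pow,
    sq n.factorial, ← card_partition_parts_eq_mul_zmu (Fintype.card_fin n) μ]
  ring

end CosetType

/-- `|H_μ| = (2^n n!)^2 / (2^{ℓ(μ)} z_μ)`. -/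
theorem stmt1 (n : ℕ) (μ : Nat.Partition n) :
    Nat.card {σ : Equiv.Perm (Fin (2*n)) // cosetType n σ = μ.parts} =
      (2^n * n.factorial)^2 / (2 ^ Multiset.card μ.parts * zmu μ.parts) :=
  Nat.eq_div_of_mul_eq_left (Nat.mul_pos (by positivity) (zmu_pos μ)).ne'
    (card_cosetType_mul_eq μ)
end
end

section
/- Let $V = (v_{ij})$ be an $N \times N$ COE matrix, $N \ge 2$, and $i \ne j$. Then $\mathbb{E}[v_{ij}^2\, \overline{v_{ii} v_{jj}}] = \frac{-4}{(N+1)N(N+3)}$. -/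
open MeasureTheory Matrix

noncomputable section

/-- Borel measurable structure on the unitary group. -/
instance (N : ℕ) : MeasurableSpace (Matrix.unitaryGroup (Fin N) ℂ) := borel _

instance (N : ℕ) : BorelSpace (Matrix.unitaryGroup (Fin N) ℂ) := ⟨rfl⟩

/-- The entry `v_{ij} = (Uᵀ U)_{ij}` of the COE matrix `V = Uᵀ U` built from a
unitary matrix `U`. -/
def coeEntry {N : ℕ} (U : Matrix.unitaryGroup (Fin N) ℂ) (i j : Fin N) : ℂ :=
  (((U : Matrix (Fin N) (Fin N) ℂ))ᵀ * (U : Matrix (Fin N) (Fin N) ℂ)) i j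

/-! Invariance of Haar measure is used in two ways. Multiplying one column of `U` by a phase shows
that monomials in the `v_{ij}` containing some index a different number of times are orthogonal.
Multiplying `U` by a unitary square root of a transposition maps `v_{ij}` to
`(v_{ii} + v_{jj}) / 2`; expanding products and discarding the orthogonal cross terms gives, for
distinct `i, j, k`, `2 E|v_{ij}|² = E|v_{ii}|²`, `4 E|v_{ii} v_{ij}|² = E|v_{ii}|⁴` and
`2 E[v_{ij} v_{ik} conj(v_{ii} v_{jk})] = E[v_{ij}² conj(v_{ii} v_{jj})]`. Taking moments of the
relations `∑ₖ v_{ik} conj(v_{jk}) = δ_{ij}`, which say that `Uᵀ U` is unitary, then gives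
`(N + 1) E|v_{ii}|² = 2`, `(N + 3) E|v_{ii}|⁴ = 4 E|v_{ii}|²` and
`N E[v_{ij}² conj(v_{ii} v_{jj})] = -2 E|v_{ii} v_{ij}|²`. -/

theorem sum_eq_sum_add_card_sub_card_mul {ι R : Type*} [Fintype ι] [Ring R]
    {s : Finset ι} {f : ι → R} {c : R} (hf : ∀ k ∉ s, f k = c) :
    ∑ k, f k = ∑ k ∈ s, f k + (Fintype.card ι - s.card) * c := by
  classical
  rw [← Finset.sum_add_sum_compl s, Finset.sum_congr rfl fun k hk => hf k (Finset.mem_compl.1 hk),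
    Finset.sum_const, Finset.card_compl, nsmul_eq_mul, Nat.cast_sub (Finset.card_le_univ s)]

section Expectation

variable {X : Type*} [TopologicalSpace X] [CompactSpace X] [MeasurableSpace X] [BorelSpace X]

/-- Expectation with respect to `μ` as a linear functional on the continuous functions on a compact
space, so that linearity needs no integrability side conditions. -/
def expectation (μ : Measure X) [IsFiniteMeasure μ] : C(X, ℂ) →ₗ[ℂ] ℂ where
  toFun f := ∫ x, f x ∂μ
  map_add' f g := integral_add
    (f.continuous.integrable_of_hasCompactSupport (.of_compactSpace f))
    (g.continuous.integrable_of_hasCompactSupport (.of_compactSpace g))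
  map_smul' c f := integral_const_mul c f

theorem expectation_apply (μ : Measure X) [IsFiniteMeasure μ] (f : C(X, ℂ)) :
    expectation μ f = ∫ x, f x ∂μ :=
  rfl

theorem expectation_one (μ : Measure X) [IsProbabilityMeasure μ] : expectation μ 1 = 1 := by
  simp [expectation_apply]

end Expectation

section RightTranslation

variable {G : Type*} [TopologicalSpace G] [Group G] [IsTopologicalGroup G]

/-- The right regular representation of `G` on continuous functions, `(R_g f)(x) = f (x g)`, by
automorphisms of the star algebra `C(G, ℂ)`. -/
def rightTranslate (g : G) : C(G, ℂ) →⋆ₐ[ℂ] C(G, ℂ) :=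
  ContinuousMap.compStarAlgHom' ℂ ℂ ⟨(· * g), by fun_prop⟩

@[simp]
theorem rightTranslate_apply (g : G) (f : C(G, ℂ)) (x : G) : rightTranslate g f x = f (x * g) :=
  rfl

variable [CompactSpace G] [MeasurableSpace G] [BorelSpace G]
  (μ : Measure G) [IsFiniteMeasure μ] [μ.IsMulRightInvariant]

theorem expectation_rightTranslate (g : G) (f : C(G, ℂ)) :
    expectation μ (rightTranslate g f) = expectation μ f :=
  integral_mul_right_eq_self f g

theorem expectation_mul_star_eq_zero {g : G} {a b : ℂ} {f h : C(G, ℂ)}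
    (hf : rightTranslate g f = a • f) (hh : rightTranslate g h = b • h) (hab : a * star b ≠ 1) :
    expectation μ (f * star h) = 0 := by
  have invariance : expectation μ (f * star h) = a * star b * expectation μ (f * star h) := by
    conv_lhs => rw [← expectation_rightTranslate μ g, map_mul, map_star, hf, hh, star_smul,
      smul_mul_smul_comm, map_smul, smul_eq_mul]
  by_contra hne
  exact hab (mul_right_cancel₀ hne (by rw [one_mul, ← invariance]))

end RightTranslation

theorem isMulRightInvariant_of_isHaarMeasure {G : Type*} [TopologicalSpace G] [Group G]
    [IsTopologicalGroup G] [CompactSpace G] [MeasurableSpace G] [BorelSpace G]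
    (μ : Measure G) [μ.IsHaarMeasure] [IsProbabilityMeasure μ] : μ.IsMulRightInvariant where
  map_mul_right_eq_self g := by
    have : IsProbabilityMeasure (μ.map (· * g)) := Measure.isProbabilityMeasure_map (by fun_prop)
    exact Measure.isHaarMeasure_eq_of_isProbabilityMeasure _ _

theorem smul_one_add_smul_mem_unitary {A : Type*} [Ring A] [StarRing A] [Algebra ℂ A]
    [StarModule ℂ A] {p : A} (hp : IsSelfAdjoint p) (hpp : p * p = 1) :
    ((1 + Complex.I) / 2) • (1 : A) + ((1 - Complex.I) / 2) • p ∈ unitary A := by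
  have star_eq : star (((1 + Complex.I) / 2) • (1 : A) + ((1 - Complex.I) / 2) • p) =
      ((1 - Complex.I) / 2) • (1 : A) + ((1 + Complex.I) / 2) • p := by
    simp [hp.star_eq, sub_eq_add_neg]
  rw [Unitary.mem_iff, star_eq]
  constructor <;>
  · simp only [add_mul, mul_add, smul_mul_smul_comm, mul_one, one_mul, hpp]
    match_scalars <;> grind [Complex.I_sq]

section UnitaryGroup

variable {n : Type*} [Fintype n] [DecidableEq n]

instance : CompactSpace (unitaryGroup n ℂ) := by
  refine isCompact_iff_compactSpace.1 (?_ : IsCompact (unitaryGroup n ℂ : Set (Matrix n n ℂ)))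
  have polydisc : IsCompact (Set.univ.pi fun _ : n => Set.univ.pi fun _ : n =>
      Metric.closedBall (0 : ℂ) 1) :=
    isCompact_univ_pi fun _ => isCompact_univ_pi fun _ => isCompact_closedBall _ _
  refine polydisc.of_isClosed_subset (isClosed_unitary (R := Matrix n n ℂ)) ?_
  intro A hA i _ j _
  exact mem_closedBall_zero_iff.2 (entry_norm_bound_of_unitary hA i j)

/-- The entry `v_{ij}` of the COE matrix `Uᵀ U`, as a continuous function of `U`. -/
def coeVar (i j : n) : C(unitaryGroup n ℂ, ℂ) where
  toFun U := ((U : Matrix n n ℂ)ᵀ * (U : Matrix n n ℂ)) i j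
  continuous_toFun := by fun_prop

theorem coeVar_apply (i j : n) (U : unitaryGroup n ℂ) :
    coeVar i j U = ((U : Matrix n n ℂ)ᵀ * (U : Matrix n n ℂ)) i j :=
  rfl

theorem coeVar_comm (i j : n) : coeVar i j = coeVar j i := by
  ext U
  simp only [coeVar_apply, mul_apply, transpose_apply, mul_comm]

theorem sum_coeVar_mul_star_coeVar (i j : n) :
    ∑ k, coeVar i k * star (coeVar j k) = if i = j then 1 else 0 := by
  ext U
  have unitary_transpose : (U : Matrix n n ℂ)ᵀ ∈ unitaryGroup n ℂ :=
    transpose_mem_unitaryGroup_iff.2 U.2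
  have row_orthonormal := congrFun₂ (mem_unitaryGroup_iff.1 (mul_mem unitary_transpose U.2)) i j
  rw [Matrix.mul_apply, Matrix.one_apply] at row_orthonormal
  simp only [ContinuousMap.sum_apply, ContinuousMap.mul_apply, ContinuousMap.star_apply]
  refine row_orthonormal.trans ?_
  split_ifs <;> rfl

theorem rightTranslate_coeVar_apply (W U : unitaryGroup n ℂ) (i j : n) :
    rightTranslate W (coeVar i j) U =
      ((W : Matrix n n ℂ)ᵀ * ((U : Matrix n n ℂ)ᵀ * (U : Matrix n n ℂ)) *
        (W : Matrix n n ℂ)) i j := by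
  simp [coeVar_apply, Matrix.mul_assoc]

/-- The diagonal unitary matrix with entry `z` at `r` and `1` elsewhere. -/
def phaseAt (r : n) (z : Circle) : unitaryGroup n ℂ :=
  ⟨diagonal fun i => if i = r then (z : ℂ) else 1, by
    rw [mem_unitaryGroup_iff, star_eq_conjTranspose, diagonal_conjTranspose, diagonal_mul_diagonal,
      ← diagonal_one]
    congr! 2 with i
    by_cases hi : i = r <;> simp [hi, Complex.mul_conj]⟩

theorem rightTranslate_phaseAt_coeVar (r : n) (z : Circle) (i j : n) :
    rightTranslate (phaseAt r z) (coeVar i j) =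
      ((if i = r then (z : ℂ) else 1) * if j = r then (z : ℂ) else 1) • coeVar i j := by
  ext U
  rw [rightTranslate_coeVar_apply]
  simp only [phaseAt, diagonal_transpose, mul_diagonal, diagonal_mul, ContinuousMap.smul_apply,
    coeVar_apply, smul_eq_mul, mul_right_comm]

/-- `f` has weight `m` at `r`: it is multiplied by `z ^ m` when the `r`-th column of `U` is
multiplied by the phase `z`. For a monomial in the `v_{ij}`, `m` counts the occurrences of the
index `r`. -/
def HasWeightAt (r : n) (m : ℕ) (f : C(unitaryGroup n ℂ, ℂ)) : Prop :=
  ∀ z : Circle, rightTranslate (phaseAt r z) f = (z : ℂ) ^ m • f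

theorem hasWeightAt_coeVar (r i j : n) :
    HasWeightAt r ((if i = r then 1 else 0) + if j = r then 1 else 0) (coeVar i j) := by
  intro z
  rw [rightTranslate_phaseAt_coeVar]
  split_ifs <;> simp [sq]

theorem HasWeightAt.mul {r : n} {k l : ℕ} {f g : C(unitaryGroup n ℂ, ℂ)}
    (hf : HasWeightAt r k f) (hg : HasWeightAt r l g) : HasWeightAt r (k + l) (f * g) := by
  intro z
  rw [map_mul, hf z, hg z, smul_mul_smul_comm, pow_add]

theorem HasWeightAt.pow {r : n} {m : ℕ} {f : C(unitaryGroup n ℂ, ℂ)}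
    (hf : HasWeightAt r m f) (k : ℕ) : HasWeightAt r (m * k) (f ^ k) := by
  intro z
  rw [map_pow, hf z, smul_pow, pow_mul]

/-- The unitary square root `(1 + I) / 2 + (1 - I) / 2 • P` of the matrix `P` exchanging the `i`-th
and `j`-th coordinates, where `I` is the imaginary unit. -/
def sqrtSwap (i j : n) : unitaryGroup n ℂ :=
  ⟨((1 + Complex.I) / 2) • 1 + ((1 - Complex.I) / 2) • swap ℂ i j,
    smul_one_add_smul_mem_unitary (conjTranspose_swap i j) (swap_mul_self i j)⟩

theorem rightTranslate_sqrtSwap_coeVar (i j a b : n) :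
    rightTranslate (sqrtSwap i j) (coeVar a b) =
      (1 / 2 : ℂ) • (coeVar (Equiv.swap i j a) b + coeVar a (Equiv.swap i j b)) +
        (Complex.I / 2) • (coeVar a b - coeVar (Equiv.swap i j a) (Equiv.swap i j b)) := by
  ext U
  rw [rightTranslate_coeVar_apply]
  simp only [sqrtSwap, swap, transpose_add, transpose_smul, transpose_one, transpose_permMatrix,
    Equiv.swap_inv, Matrix.add_mul, Algebra.smul_mul_assoc, one_mul, PEquiv.toMatrix_toPEquiv_mul,
    Matrix.mul_add, Algebra.mul_smul_comm, mul_one, smul_add, PEquiv.mul_toMatrix_toPEquiv,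
    Equiv.symm_swap, Matrix.add_apply, Matrix.smul_apply, smul_eq_mul, submatrix_apply, id_eq,
    one_div, ContinuousMap.add_apply, ContinuousMap.coe_smul, Pi.smul_apply, coeVar_apply,
    ContinuousMap.coe_sub, Pi.sub_apply]
  grind [Complex.I_sq]

theorem rightTranslate_sqrtSwap_rightTranslate_sqrtSwap_coeVar (i j a b : n) :
    rightTranslate (sqrtSwap i j) (rightTranslate (sqrtSwap i j) (coeVar a b)) =
      coeVar (Equiv.swap i j a) (Equiv.swap i j b) := by
  simp only [rightTranslate_sqrtSwap_coeVar, map_add, map_sub, map_smul, Equiv.swap_apply_self]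
  match_scalars <;> grind [Complex.I_sq]

theorem rightTranslate_sqrtSwap_diag (i j : n) :
    rightTranslate (sqrtSwap i j) (coeVar i i) =
      coeVar i j + (Complex.I / 2) • (coeVar i i - coeVar j j) := by
  simp only [rightTranslate_sqrtSwap_coeVar, Equiv.swap_apply_left, coeVar_comm j i]
  module

theorem rightTranslate_sqrtSwap_offDiag (i j : n) :
    rightTranslate (sqrtSwap i j) (coeVar i j) = (1 / 2 : ℂ) • (coeVar i i + coeVar j j) := by
  simp only [rightTranslate_sqrtSwap_coeVar, Equiv.swap_apply_left, Equiv.swap_apply_right,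
    coeVar_comm j i]
  module

theorem rightTranslate_sqrtSwap_diag_mul_offDiag (i j : n) :
    rightTranslate (sqrtSwap i j) (coeVar i i * coeVar i j) =
      (Complex.I / 4) • coeVar i i ^ 2 + (1 / 2 : ℂ) • (coeVar i i * coeVar i j) +
        (1 / 2 : ℂ) • (coeVar i j * coeVar j j) + (-Complex.I / 4) • coeVar j j ^ 2 := by
  rw [map_mul, rightTranslate_sqrtSwap_diag, rightTranslate_sqrtSwap_offDiag]
  algebra

theorem rightTranslate_sqrtSwap_diag_of_ne {i j k : n} (hij : i ≠ j) (hik : i ≠ k) :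
    rightTranslate (sqrtSwap j k) (coeVar i i) = coeVar i i := by
  rw [rightTranslate_sqrtSwap_coeVar, Equiv.swap_apply_of_ne_of_ne hij hik]
  module

theorem rightTranslate_sqrtSwap_offDiag_mul_offDiag {i j k : n} (hij : i ≠ j) (hik : i ≠ k) :
    rightTranslate (sqrtSwap j k) (coeVar i j * coeVar i k) =
      (1 / 2 : ℂ) • coeVar i j ^ 2 + (1 / 2 : ℂ) • coeVar i k ^ 2 := by
  ext U
  simp only [map_mul, rightTranslate_sqrtSwap_coeVar, Equiv.swap_apply_of_ne_of_ne hij hik,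
    Equiv.swap_apply_left, Equiv.swap_apply_right, ContinuousMap.mul_apply, ContinuousMap.add_apply,
    ContinuousMap.sub_apply, ContinuousMap.smul_apply, ContinuousMap.pow_apply, smul_eq_mul]
  linear_combination -(1 / 4) * (coeVar i j U - coeVar i k U) ^ 2 * Complex.I_sq

theorem rightTranslate_sqrtSwap_diag_mul_offDiag_of_ne {i j k : n} (hij : i ≠ j) (hik : i ≠ k) :
    rightTranslate (sqrtSwap j k) (coeVar i i * coeVar j k) =
      (1 / 2 : ℂ) • (coeVar i i * coeVar j j) + (1 / 2 : ℂ) • (coeVar i i * coeVar k k) := by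
  rw [map_mul, rightTranslate_sqrtSwap_diag_of_ne hij hik, rightTranslate_sqrtSwap_offDiag,
    mul_smul_comm, mul_add, smul_add]

section Moments

variable [MeasurableSpace (unitaryGroup n ℂ)] [BorelSpace (unitaryGroup n ℂ)]
  (μ : Measure (unitaryGroup n ℂ)) [IsFiniteMeasure μ]

theorem sum_expectation_coeVar_mul_star_coeVar_mul (i j : n) (f : C(unitaryGroup n ℂ, ℂ)) :
    ∑ k, expectation μ (coeVar i k * star (coeVar j k) * f) =
      if i = j then expectation μ f else 0 := by
  rw [← map_sum, ← Finset.sum_mul, sum_coeVar_mul_star_coeVar]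
  split_ifs <;> simp

variable [μ.IsMulRightInvariant]

theorem HasWeightAt.expectation_mul_star_eq_zero {r : n} {k l : ℕ} {f g : C(unitaryGroup n ℂ, ℂ)}
    (hf : HasWeightAt r k f) (hg : HasWeightAt r l g) (hkl : k ≠ l) :
    expectation μ (f * star g) = 0 := by
  have order_ne_zero : k + l + 1 ≠ 0 := by omega
  have primitive := Complex.isPrimitiveRoot_exp (k + l + 1) order_ne_zero
  set ζ := Complex.exp (2 * Real.pi * Complex.I / (k + l + 1 : ℕ))
  have norm_one : ‖ζ‖ = 1 := primitive.norm'_eq_one order_ne_zero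
  let z : Circle := ⟨ζ, mem_sphere_zero_iff_norm.2 norm_one⟩
  refine _root_.expectation_mul_star_eq_zero μ (hf z) (hg z) fun h => hkl ?_
  refine primitive.pow_inj (by omega) (by omega) ?_
  have unimodular : star (ζ ^ l) * ζ ^ l = 1 := by
    rw [star_pow, ← mul_pow, Complex.star_def, Complex.conj_mul', norm_one]
    simp
  calc ζ ^ k = ζ ^ k * star (ζ ^ l) * ζ ^ l := by rw [mul_assoc, unimodular, mul_one]
    _ = ζ ^ l := by rw [show ζ ^ k * star (ζ ^ l) = 1 from h, one_mul]

theorem expectation_sum_smul_mul_star_sum_smul {ι : Type*} [Fintype ι] {r : n} {w : ι → ℕ}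
    (hw : Function.Injective w) {f g : ι → C(unitaryGroup n ℂ, ℂ)}
    (hf : ∀ k, HasWeightAt r (w k) (f k)) (hg : ∀ k, HasWeightAt r (w k) (g k)) (a b : ι → ℂ) :
    expectation μ ((∑ k, a k • f k) * star (∑ k, b k • g k)) =
      ∑ k, a k * star (b k) * expectation μ (f k * star (g k)) := by
  rw [star_sum, Finset.sum_mul_sum, map_sum]
  refine Finset.sum_congr rfl fun k _ => ?_
  simp only [map_sum, star_smul, smul_mul_smul_comm, map_smul, smul_eq_mul]
  refine Fintype.sum_eq_single k fun l hlk => ?_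
  rw [(hf k).expectation_mul_star_eq_zero μ (hg l) (hw.ne hlk.symm), mul_zero]

theorem expectation_rightTranslate_sqrtSwap_twice (i j : n) (f : C(unitaryGroup n ℂ, ℂ)) :
    expectation μ (rightTranslate (sqrtSwap i j) (rightTranslate (sqrtSwap i j) f)) =
      expectation μ f := by
  rw [expectation_rightTranslate, expectation_rightTranslate]

theorem expectation_diag_pow_mul_star_congr (i j : n) (m : ℕ) :
    expectation μ (coeVar j j ^ m * star (coeVar j j ^ m)) =
      expectation μ (coeVar i i ^ m * star (coeVar i i ^ m)) := by
  rw [← expectation_rightTranslate_sqrtSwap_twice μ i j (coeVar i i ^ m * star (coeVar i i ^ m))]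
  simp [map_star, rightTranslate_sqrtSwap_rightTranslate_sqrtSwap_coeVar]

theorem two_mul_expectation_offDiag {i j : n} (hij : i ≠ j) :
    2 * expectation μ (coeVar i j * star (coeVar i j)) =
      expectation μ (coeVar i i * star (coeVar i i)) := by
  have swapped := expectation_diag_pow_mul_star_congr μ i j 1
  let diag := ![coeVar i i, coeVar j j]
  have translate : rightTranslate (sqrtSwap i j) (coeVar i j) =
      ∑ k, (![1 / 2, 1 / 2] : Fin 2 → ℂ) k • diag k := by
    rw [rightTranslate_sqrtSwap_offDiag, smul_add, Fin.sum_univ_two]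
    rfl
  have weight : ∀ k, HasWeightAt i (![2, 0] k) (diag k) := by
    simpa [diag, hij.symm] using
      And.intro (hasWeightAt_coeVar i i i) (hasWeightAt_coeVar i j j)
  have invariance := expectation_rightTranslate μ (sqrtSwap i j) (coeVar i j * star (coeVar i j))
  rw [map_mul, map_star, translate, expectation_sum_smul_mul_star_sum_smul μ (by decide) weight
    weight, Fin.sum_univ_two] at invariance
  simp only [diag, cons_val, Complex.star_def, map_div₀, map_one, Complex.conj_ofNat] at invariance
  rw [pow_one, pow_one] at swapped
  linear_combination -2 * invariance + swapped / 2

theorem four_mul_expectation_diag_mul_offDiag {i j : n} (hij : i ≠ j) :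
    4 * expectation μ (coeVar i i * coeVar i j * star (coeVar i i * coeVar i j)) =
      expectation μ (coeVar i i ^ 2 * star (coeVar i i ^ 2)) := by
  have swapped_sq := expectation_diag_pow_mul_star_congr μ i j 2
  have swapped_mul : expectation μ (coeVar i j * coeVar j j * star (coeVar i j * coeVar j j)) =
      expectation μ (coeVar i i * coeVar i j * star (coeVar i i * coeVar i j)) := by
    rw [← expectation_rightTranslate_sqrtSwap_twice μ i j
      (coeVar i i * coeVar i j * star (coeVar i i * coeVar i j)), mul_comm (coeVar i j)]
    simp [map_star, rightTranslate_sqrtSwap_rightTranslate_sqrtSwap_coeVar, coeVar_comm j i]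
  let monomial :=
    ![coeVar i i ^ 2, coeVar i i * coeVar i j, coeVar i j * coeVar j j, coeVar j j ^ 2]
  have translate : rightTranslate (sqrtSwap i j) (coeVar i i * coeVar i j) =
      ∑ k, ![Complex.I / 4, 1 / 2, 1 / 2, -Complex.I / 4] k • monomial k := by
    rw [rightTranslate_sqrtSwap_diag_mul_offDiag, Fin.sum_univ_four]
    rfl
  have weight : ∀ k, HasWeightAt i (![4, 3, 1, 0] k) (monomial k) := by
    have hii := hasWeightAt_coeVar i i i
    have hi_j := hasWeightAt_coeVar i i j
    have hjj := hasWeightAt_coeVar i j j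
    simpa [monomial, Fin.forall_fin_succ, hij.symm] using
      And.intro (hii.pow 2) (And.intro (hii.mul hi_j) (And.intro (hi_j.mul hjj) (hjj.pow 2)))
  have invariance := expectation_rightTranslate μ (sqrtSwap i j)
    (coeVar i i * coeVar i j * star (coeVar i i * coeVar i j))
  rw [map_mul, map_star, translate, expectation_sum_smul_mul_star_sum_smul μ (by decide) weight
    weight, Fin.sum_univ_four] at invariance
  simp only [monomial, cons_val, swapped_sq, swapped_mul, Complex.star_def, map_div₀, map_neg,
    map_one, Complex.conj_I, Complex.conj_ofNat] at invariance
  linear_combination -8 * invariance -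
    expectation μ (coeVar i i ^ 2 * star (coeVar i i ^ 2)) * Complex.I_sq

theorem two_mul_expectation_offDiag_mul_offDiag {i j k : n} (hij : i ≠ j) (hik : i ≠ k)
    (hjk : j ≠ k) :
    2 * expectation μ (coeVar i j * coeVar i k * star (coeVar i i * coeVar j k)) =
      expectation μ (coeVar i j ^ 2 * star (coeVar i i * coeVar j j)) := by
  have swapped : expectation μ (coeVar i k ^ 2 * star (coeVar i i * coeVar k k)) =
      expectation μ (coeVar i j ^ 2 * star (coeVar i i * coeVar j j)) := by
    rw [← expectation_rightTranslate_sqrtSwap_twice μ j k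
      (coeVar i j ^ 2 * star (coeVar i i * coeVar j j))]
    simp [map_star, rightTranslate_sqrtSwap_rightTranslate_sqrtSwap_coeVar,
      Equiv.swap_apply_of_ne_of_ne hij hik]
  let square := ![coeVar i j ^ 2, coeVar i k ^ 2]
  let diag := ![coeVar i i * coeVar j j, coeVar i i * coeVar k k]
  have translate_square : rightTranslate (sqrtSwap j k) (coeVar i j * coeVar i k) =
      ∑ l, (![1 / 2, 1 / 2] : Fin 2 → ℂ) l • square l := by
    rw [rightTranslate_sqrtSwap_offDiag_mul_offDiag hij hik, Fin.sum_univ_two]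
    rfl
  have translate_diag : rightTranslate (sqrtSwap j k) (coeVar i i * coeVar j k) =
      ∑ l, (![1 / 2, 1 / 2] : Fin 2 → ℂ) l • diag l := by
    rw [rightTranslate_sqrtSwap_diag_mul_offDiag_of_ne hij hik, Fin.sum_univ_two]
    rfl
  have weight_square : ∀ l, HasWeightAt j (![2, 0] l) (square l) := by
    simpa [square, hij, hjk.symm] using
      And.intro ((hasWeightAt_coeVar j i j).pow 2) ((hasWeightAt_coeVar j i k).pow 2)
  have weight_diag : ∀ l, HasWeightAt j (![2, 0] l) (diag l) := by
    have hii := hasWeightAt_coeVar j i i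
    simpa [diag, hij, hjk.symm] using
      And.intro (hii.mul (hasWeightAt_coeVar j j j)) (hii.mul (hasWeightAt_coeVar j k k))
  have invariance := expectation_rightTranslate μ (sqrtSwap j k)
    (coeVar i j * coeVar i k * star (coeVar i i * coeVar j k))
  rw [map_mul, map_star, translate_square, translate_diag, expectation_sum_smul_mul_star_sum_smul μ
    (by decide) weight_square weight_diag, Fin.sum_univ_two] at invariance
  simp only [square, diag, cons_val, swapped, Complex.star_def, map_div₀, map_one,
    Complex.conj_ofNat] at invariance
  linear_combination -2 * invariance

theorem card_add_three_mul_expectation_diag_sq (i : n) :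
    (Fintype.card n + 3) * expectation μ (coeVar i i ^ 2 * star (coeVar i i ^ 2)) =
      4 * expectation μ (coeVar i i * star (coeVar i i)) := by
  have row_norm := sum_expectation_coeVar_mul_star_coeVar_mul μ i i (coeVar i i * star (coeVar i i))
  have diag : expectation μ (coeVar i i * star (coeVar i i) * (coeVar i i * star (coeVar i i))) =
      expectation μ (coeVar i i ^ 2 * star (coeVar i i ^ 2)) := by
    rw [mul_mul_mul_comm, ← sq, ← sq, star_pow]
  have offDiag : ∀ k ∉ ({i} : Finset n),
      expectation μ (coeVar i k * star (coeVar i k) * (coeVar i i * star (coeVar i i))) =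
        expectation μ (coeVar i i ^ 2 * star (coeVar i i ^ 2)) / 4 := fun k hk => by
    rw [← four_mul_expectation_diag_mul_offDiag μ (Ne.symm (Finset.notMem_singleton.1 hk)),
      star_mul', mul_mul_mul_comm (coeVar i i), mul_comm (coeVar i k * _)]
    ring
  rw [if_pos rfl, sum_eq_sum_add_card_sub_card_mul offDiag, Finset.sum_singleton, diag,
    Finset.card_singleton] at row_norm
  push_cast at row_norm
  linear_combination 4 * row_norm

theorem card_mul_expectation_offDiag_sq {i j : n} (hij : i ≠ j) :
    Fintype.card n * expectation μ (coeVar i j ^ 2 * star (coeVar i i * coeVar j j)) =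
      -2 * expectation μ (coeVar i i * coeVar i j * star (coeVar i i * coeVar i j)) := by
  have row_orthogonal :=
    sum_expectation_coeVar_mul_star_coeVar_mul μ i j (coeVar i j * star (coeVar i i))
  have regroup (k : n) : coeVar i k * star (coeVar j k) * (coeVar i j * star (coeVar i i)) =
      coeVar i j * coeVar i k * star (coeVar i i * coeVar j k) := by
    rw [star_mul']
    ring
  have offDiag : ∀ k ∉ ({i, j} : Finset n),
      expectation μ (coeVar i j * coeVar i k * star (coeVar i i * coeVar j k)) =
        expectation μ (coeVar i j ^ 2 * star (coeVar i i * coeVar j j)) / 2 := fun k hk => by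
    obtain ⟨hki, hkj⟩ : k ≠ i ∧ k ≠ j := by simpa using hk
    rw [← two_mul_expectation_offDiag_mul_offDiag μ hij hki.symm hkj.symm]
    ring
  simp only [regroup] at row_orthogonal
  rw [if_neg hij, sum_eq_sum_add_card_sub_card_mul offDiag, Finset.sum_pair hij,
    Finset.card_pair hij, coeVar_comm j i, mul_comm (coeVar i j) (coeVar i i), ← sq]
    at row_orthogonal
  push_cast at row_orthogonal
  linear_combination 2 * row_orthogonal

end Moments

theorem card_add_one_mul_expectation_diag [MeasurableSpace (unitaryGroup n ℂ)]
    [BorelSpace (unitaryGroup n ℂ)] (μ : Measure (unitaryGroup n ℂ)) [IsProbabilityMeasure μ]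
    [μ.IsMulRightInvariant] (i : n) :
    (Fintype.card n + 1) * expectation μ (coeVar i i * star (coeVar i i)) = 2 := by
  have row_norm := sum_expectation_coeVar_mul_star_coeVar_mul μ i i 1
  have offDiag : ∀ k ∉ ({i} : Finset n), expectation μ (coeVar i k * star (coeVar i k)) =
      expectation μ (coeVar i i * star (coeVar i i)) / 2 := fun k hk => by
    rw [← two_mul_expectation_offDiag μ (Ne.symm (Finset.notMem_singleton.1 hk))]
    ring
  simp only [mul_one, if_true, expectation_one] at row_norm
  rw [sum_eq_sum_add_card_sub_card_mul offDiag, Finset.sum_singleton,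
    Finset.card_singleton] at row_norm
  push_cast at row_norm
  linear_combination 2 * row_norm

theorem stmt16_general [MeasurableSpace (unitaryGroup n ℂ)] [BorelSpace (unitaryGroup n ℂ)]
    (μ : Measure (unitaryGroup n ℂ)) [IsProbabilityMeasure μ] [μ.IsMulRightInvariant]
    {i j : n} (hij : i ≠ j) :
    ∫ U, coeVar i j U ^ 2 * (starRingEnd ℂ) (coeVar i i U * coeVar j j U) ∂μ =
      -4 / ((Fintype.card n + 1) * Fintype.card n * (Fintype.card n + 3)) := by
  have diag := card_add_one_mul_expectation_diag μ i
  have diag_sq := card_add_three_mul_expectation_diag_sq μ i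
  have mixed := four_mul_expectation_diag_mul_offDiag μ hij
  have offDiag_sq := card_mul_expectation_offDiag_sq μ hij
  have card_ne_zero : (Fintype.card n : ℂ) ≠ 0 := by
    have : Nonempty n := ⟨i⟩
    exact_mod_cast Fintype.card_ne_zero
  have denominator_ne_zero :
      ((Fintype.card n : ℂ) + 1) * Fintype.card n * (Fintype.card n + 3) ≠ 0 :=
    mul_ne_zero (mul_ne_zero (Nat.cast_add_one_ne_zero _) card_ne_zero) (by norm_cast)
  change expectation μ (coeVar i j ^ 2 * star (coeVar i i * coeVar j j)) = _
  rw [eq_div_iff denominator_ne_zero]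
  set N : ℂ := (Fintype.card n : ℂ)
  linear_combination (N + 1) * (N + 3) * offDiag_sq - (N + 1) * (N + 3) / 2 * mixed -
    (N + 1) / 2 * diag_sq - 2 * diag

end UnitaryGroup

/-- `E[v_{ij}² conj(v_{ii} v_{jj})] = -4 / ((N+1) N (N+3))` for `i ≠ j`, `N ≥ 2`. -/
theorem stmt16 (N : ℕ) (hN : 2 ≤ N) (i j : Fin N) (hij : i ≠ j)
    (μ : Measure (Matrix.unitaryGroup (Fin N) ℂ))
    [μ.IsHaarMeasure] [IsProbabilityMeasure μ] :
    ∫ U, (coeEntry U i j)^2 *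
        (starRingEnd ℂ) (coeEntry U i i * coeEntry U j j) ∂μ =
      -4 / (((N : ℂ) + 1) * (N : ℂ) * ((N : ℂ) + 3)) := by
  have := isMulRightInvariant_of_isHaarMeasure μ
  simpa only [Fintype.card_fin, coeVar_apply, coeEntry] using stmt16_general μ hij
end
end
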